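/- arXiv:1511.00960 — 3 statements merged into one kernel-verified Lean document; each statement's English description precedes it below -/
import Mathlib

section
/- For every smooth function φ on U one has ∇^I(φ, x) + ∇^{II}(φ, n) = 0, i.e. g^{ij} φ_{/i} x_{/j} + b^{ij} φ_{/i} n_{/j} = 0 as an ℝ³-valued identity on U. -/
open Matrix

noncomputable section

/-- The parameter domain `ℝ²`. -/
abbrev Param : Type := Fin 2 → ℝ

/-- Vectors in Euclidean 3-space. -/
abbrev Vec3 : Type := Fin 3 → ℝ

/-- Partial derivative of a vector-valued function in the `i`-th coordinate direction. -/
noncomputable def pd (i : Fin 2) (f : Param → Vec3) (u : Param) : Vec3 :=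
  fderiv ℝ f u (Pi.single i 1)

/-- Partial derivative of a scalar function in the `i`-th coordinate direction. -/
noncomputable def pds (i : Fin 2) (f : Param → ℝ) (u : Param) : ℝ :=
  fderiv ℝ f u (Pi.single i 1)

/-- The Euclidean inner product on `ℝ³`. -/
def dot3 (a b : Vec3) : ℝ := ∑ k, a k * b k

/-- The Euclidean norm on `ℝ³`. -/
noncomputable def norm3 (a : Vec3) : ℝ := Real.sqrt (dot3 a a)

/-- The Gauss map `n = (x_{/1} × x_{/2}) / ‖x_{/1} × x_{/2}‖`. -/
noncomputable def gaussMap (x : Param → Vec3) (u : Param) : Vec3 :=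
  (norm3 (crossProduct (pd 0 x u) (pd 1 x u)))⁻¹ • crossProduct (pd 0 x u) (pd 1 x u)

/-- Components `g_{ij}` of the first fundamental form. -/
noncomputable def fformI (x : Param → Vec3) (u : Param) : Matrix (Fin 2) (Fin 2) ℝ :=
  Matrix.of fun i j => dot3 (pd i x u) (pd j x u)

/-- Components `b_{ij} = ⟨∂²x/∂u^i∂u^j, n⟩` of the second fundamental form. -/
noncomputable def fformII (x : Param → Vec3) (u : Param) : Matrix (Fin 2) (Fin 2) ℝ :=
  Matrix.of fun i j => dot3 (pd i (pd j x) u) (gaussMap x u)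

/-- Components `e_{ij} = ⟨n_{/i}, n_{/j}⟩` of the third fundamental form. -/
noncomputable def fformIII (x : Param → Vec3) (u : Param) : Matrix (Fin 2) (Fin 2) ℝ :=
  Matrix.of fun i j => dot3 (pd i (gaussMap x) u) (pd j (gaussMap x) u)

/-- The Gauss curvature `K = det(b_{ij}) / det(g_{ij})`. -/
noncomputable def gaussCurv (x : Param → Vec3) (u : Param) : ℝ :=
  (fformII x u).det / (fformI x u).det

/-- The mean curvature `H = (1/2) g^{ij} b_{ij}`. -/
noncomputable def meanCurv (x : Param → Vec3) (u : Param) : ℝ :=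
  (1 / 2) * ∑ i, ∑ j, (fformI x u)⁻¹ i j * fformII x u i j

/-- First Beltrami operator `∇^J(φ, ψ) = a^{ij} φ_{/i} ψ_{/j}` with respect to the
fundamental form with component matrix `a`, for scalar `φ` and `ℝ³`-valued `ψ`. -/
noncomputable def beltrami1 (a : Param → Matrix (Fin 2) (Fin 2) ℝ)
    (φ : Param → ℝ) (ψ : Param → Vec3) (u : Param) : Vec3 :=
  ∑ i, ∑ j, ((a u)⁻¹ i j * pds i φ u) • pd j ψ u

/-- Second Beltrami operator
`Δ^J f = −(1/√|det a|) ∂_i (√|det a| a^{ij} ∂_j f)` with respect to the fundamental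
form with component matrix `a`, acting componentwise on `ℝ³`-valued functions. -/
noncomputable def beltrami2 (a : Param → Matrix (Fin 2) (Fin 2) ℝ)
    (f : Param → Vec3) (u : Param) : Vec3 :=
  -((Real.sqrt |(a u).det|)⁻¹ •
    ∑ i, ∑ j, pd i (fun v => (Real.sqrt |(a v).det| * (a v)⁻¹ i j) • pd j f v) u)

/-- `x` is an immersion on `U`: the partial derivatives are linearly independent. -/
def Immersed (x : Param → Vec3) (U : Set Param) : Prop :=
  ∀ u ∈ U, LinearIndependent ℝ ![pd 0 x u, pd 1 x u]

/-- `f` is nonconstant on `U`. -/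
def NonconstOn (f : Param → Vec3) (U : Set Param) : Prop :=
  ¬ ∃ v : Vec3, ∀ u ∈ U, f u = v

theorem pds_dot3 (i : Fin 2) (f g : Param → Vec3) (u : Param)
    (hf : DifferentiableAt ℝ f u) (hg : DifferentiableAt ℝ g u) :
    pds i (fun v => dot3 (f v) (g v)) u = dot3 (pd i f u) (g u) + dot3 (f u) (pd i g u) := by
  have hf' := hasFDerivAt_pi'.1 hf.hasFDerivAt
  have hg' := hasFDerivAt_pi'.1 hg.hasFDerivAt
  have h : HasFDerivAt (fun v => dot3 (f v) (g v)) _ u :=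
    HasFDerivAt.fun_sum (u := Finset.univ) (fun k _ => (hf' k).mul (hg' k))
  unfold pds pd
  rw [h.fderiv]
  simp [dot3, Fin.sum_univ_three]
  ring

theorem pds_zero_of_const (i : Fin 2) (f : Param → ℝ) (u : Param) (c : ℝ)
    (h : f =ᶠ[nhds u] fun _ => c) : pds i f u = 0 := by
  unfold pds
  rw [h.fderiv_eq]
  simp

theorem dot3_self_pos (a : Vec3) (h : a ≠ 0) : 0 < dot3 a a := by
  have h0 : 0 ≤ dot3 a a := Finset.sum_nonneg fun k _ => mul_self_nonneg _
  refine lt_of_le_of_ne h0 fun h1 => h ?_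
  have := (Finset.sum_eq_zero_iff_of_nonneg (fun k _ => mul_self_nonneg (a k))).1 h1.symm
  funext k
  simpa using this k (Finset.mem_univ k)

theorem dot3_cross_left (p q : Vec3) : dot3 (crossProduct p q) p = 0 := by
  simp [dot3, Fin.sum_univ_three, cross_apply]; ring

theorem dot3_cross_right (p q : Vec3) : dot3 (crossProduct p q) q = 0 := by
  simp [dot3, Fin.sum_univ_three, cross_apply]; ring

theorem dot3_smul_left (r : ℝ) (p q : Vec3) : dot3 (r • p) q = r * dot3 p q := by
  simp [dot3, Fin.sum_univ_three]; ring

theorem dot3_add_left (a p q : Vec3) : dot3 (a + p) q = dot3 a q + dot3 p q := by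
  simp [dot3, Fin.sum_univ_three]; ring

theorem dot3_smul_right (r : ℝ) (p q : Vec3) : dot3 p (r • q) = r * dot3 p q := by
  simp [dot3, Fin.sum_univ_three]; ring

theorem dot3_comm (p q : Vec3) : dot3 p q = dot3 q p := by
  simp [dot3, Fin.sum_univ_three]; ring

theorem eq_zero_of_dots (p q w : Vec3) (hc : crossProduct p q ≠ 0) (h1 : dot3 w p = 0)
    (h2 : dot3 w q = 0) (h3 : dot3 w (crossProduct p q) = 0) : w = 0 := by
  have hdet : (Matrix.of ![p, q, crossProduct p q]).det ≠ 0 := by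
    have : (Matrix.of ![p, q, crossProduct p q]).det
        = dot3 (crossProduct p q) (crossProduct p q) := by
      simp [Matrix.det_fin_three, dot3, Fin.sum_univ_three, cross_apply]; ring
    rw [this]
    exact (dot3_self_pos _ hc).ne'
  refine Matrix.eq_zero_of_mulVec_eq_zero hdet ?_
  rw [dot3_comm] at h1 h2 h3
  funext k
  fin_cases k
  · simpa [Matrix.mulVec, dotProduct, dot3] using h1
  · simpa [Matrix.mulVec, dotProduct, dot3] using h2
  · simpa [Matrix.mulVec, dotProduct, dot3] using h3

theorem det_gram (p q : Vec3) : dot3 p p * dot3 q q - dot3 p q * dot3 q p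
    = dot3 (crossProduct p q) (crossProduct p q) := by
  simp [dot3, Fin.sum_univ_three, cross_apply]; ring

theorem differentiableAt_dot3 (f g : Param → Vec3) (u : Param)
    (hf : DifferentiableAt ℝ f u) (hg : DifferentiableAt ℝ g u) :
    DifferentiableAt ℝ (fun v => dot3 (f v) (g v)) u := by
  have hf' := differentiableAt_pi.1 hf
  have hg' := differentiableAt_pi.1 hg
  unfold dot3
  exact DifferentiableAt.fun_sum fun k _ => (hf' k).mul (hg' k)

theorem differentiableAt_cross (f g : Param → Vec3) (u : Param)
    (hf : DifferentiableAt ℝ f u) (hg : DifferentiableAt ℝ g u) :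
    DifferentiableAt ℝ (fun v => crossProduct (f v) (g v)) u := by
  have hf' := differentiableAt_pi.1 hf
  have hg' := differentiableAt_pi.1 hg
  rw [differentiableAt_pi]
  intro k
  fin_cases k <;> simp only [cross_apply]
  · exact ((hf' 1).mul (hg' 2)).sub ((hf' 2).mul (hg' 1))
  · exact ((hf' 2).mul (hg' 0)).sub ((hf' 0).mul (hg' 2))
  · exact ((hf' 0).mul (hg' 1)).sub ((hf' 1).mul (hg' 0))

theorem differentiableAt_gauss (x : Param → Vec3) (u : Param)
    (h : ∀ i, DifferentiableAt ℝ (pd i x) u)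
    (hc : crossProduct (pd 0 x u) (pd 1 x u) ≠ 0) : DifferentiableAt ℝ (gaussMap x) u := by
  have h1 := differentiableAt_cross _ _ u (h 0) (h 1)
  have h2 := differentiableAt_dot3 _ _ u h1 h1
  have h3 := dot3_self_pos _ hc
  exact ((h2.sqrt h3.ne').inv (Real.sqrt_pos.2 h3).ne').smul h1

theorem gauss_dot (x : Param → Vec3) (j : Fin 2) (u : Param) :
    dot3 (gaussMap x u) (pd j x u) = 0 := by
  unfold gaussMap
  rw [dot3_smul_left]
  fin_cases j
  · simp [dot3_cross_left]
  · simp [dot3_cross_right]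

theorem gauss_unit (x : Param → Vec3) (u : Param)
    (hc : crossProduct (pd 0 x u) (pd 1 x u) ≠ 0) :
    dot3 (gaussMap x u) (gaussMap x u) = 1 := by
  unfold gaussMap
  have h3 := dot3_self_pos _ hc
  rw [dot3_smul_left, dot3_smul_right, norm3]
  have h4 := Real.sqrt_pos.2 h3
  have h5 := Real.sq_sqrt h3.le
  field_simp
  exact h5.symm

/-- `∇^I(φ, x) + ∇^{II}(φ, n) = 0` on `U`. -/
theorem stmt0 (U : Set Param) (x : Param → Vec3)
    (hU : IsOpen U) (hUconn : IsConnected U)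
    (hx : ContDiffOn ℝ (⊤ : ℕ∞) x U) (himm : Immersed x U)
    (hpar : ∀ u ∈ U, (fformII x u).det ≠ 0)
    (φ : Param → ℝ) (hφ : ContDiffOn ℝ (⊤ : ℕ∞) φ U) :
    ∀ u ∈ U,
      beltrami1 (fformI x) φ x u + beltrami1 (fformII x) φ (gaussMap x) u = 0 := by
  have hcr : ∀ v ∈ U, crossProduct (pd 0 x v) (pd 1 x v) ≠ 0 := fun v hv =>
    crossProduct_ne_zero_iff_linearIndependent.2 (himm v hv)
  intro u hu
  have hUn : U ∈ nhds u := hU.mem_nhds hu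
  have hd : ∀ i, DifferentiableAt ℝ (pd i x) u := by
    intro i
    have h1 : ContDiffAt ℝ 2 x u := (hx.contDiffAt hUn).of_le (WithTop.coe_le_coe.2 (le_top : (2 : ℕ∞) ≤ ⊤))
    have h2 : ContDiffAt ℝ 1 (fderiv ℝ x) u := h1.fderiv_right (by norm_num)
    exact (h2.differentiableAt (by norm_num)).clm_apply (differentiableAt_const _)
  have hn := differentiableAt_gauss x u hd (hcr u hu)
  have hb : ∀ i j, dot3 (pd i (gaussMap x) u) (pd j x u) = - fformII x u i j := by
    intro i j
    have h := pds_dot3 i _ _ u hn (hd j)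
    rw [pds_zero_of_const i _ u 0 (Filter.Eventually.of_forall fun v => gauss_dot x j v)] at h
    simp only [fformII, Matrix.of_apply]
    rw [dot3_comm (pd i (pd j x) u)]
    linarith
  have hnn : ∀ i, dot3 (pd i (gaussMap x) u) (gaussMap x u) = 0 := by
    intro i
    have h := pds_dot3 i _ _ u hn hn
    rw [pds_zero_of_const i _ u 1 (Filter.eventually_of_mem hUn fun v hv =>
      gauss_unit x v (hcr v hv)), dot3_comm (gaussMap x u)] at h
    linarith
  have hg : (fformI x u).det ≠ 0 := by
    rw [Matrix.det_fin_two]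
    simp only [fformI, Matrix.of_apply]
    rw [det_gram]
    exact (dot3_self_pos _ (hcr u hu)).ne'
  have hI : (fformI x u)⁻¹ * fformI x u = 1 := Matrix.nonsing_inv_mul _ hg.isUnit
  have hII : (fformII x u)⁻¹ * fformII x u = 1 := Matrix.nonsing_inv_mul _ (hpar u hu).isUnit
  have key : ∀ k, dot3 (beltrami1 (fformI x) φ x u
      + beltrami1 (fformII x) φ (gaussMap x) u) (pd k x u) = 0 := by
    intro k
    have e : ∀ i j, dot3 (pd i x u) (pd j x u) = fformI x u i j := fun _ _ => rfl
    have a : ∀ i, _ := fun i => congrFun (congrFun (hI.trans hII.symm) i) k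
    simp only [Matrix.mul_apply, Fin.sum_univ_two] at a
    simp only [beltrami1, Fin.sum_univ_two, dot3_add_left, dot3_smul_left, e, hb]
    linear_combination pds 0 φ u * a 0 + pds 1 φ u * a 1
  have keyn : dot3 (beltrami1 (fformI x) φ x u
      + beltrami1 (fformII x) φ (gaussMap x) u) (gaussMap x u) = 0 := by
    have e : ∀ j, dot3 (pd j x u) (gaussMap x u) = 0 := fun j => by
      rw [dot3_comm, gauss_dot]
    simp only [beltrami1, Fin.sum_univ_two, dot3_add_left, dot3_smul_left, e, hnn]
    ring
  refine eq_zero_of_dots _ _ _ (hcr u hu) (key 0) (key 1) ?_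
  have h4 := Real.sqrt_pos.2 (dot3_self_pos _ (hcr u hu))
  unfold gaussMap at keyn
  rw [dot3_smul_right] at keyn
  exact (mul_eq_zero.1 keyn).resolve_left (inv_ne_zero h4.ne')
end
end

section
/- For every smooth function φ on U one has ∇^{II}(φ, x) + ∇^{III}(φ, n) = 0, i.e. b^{ij} φ_{/i} x_{/j} + e^{ij} φ_{/i} n_{/j} = 0 as an ℝ³-valued identity on U. -/
open Matrix

noncomputable section

lemma fderiv_dot3 (f g : Param → Vec3) (u e : Param) (hf : DifferentiableAt ℝ f u)
    (hg : DifferentiableAt ℝ g u) :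
    fderiv ℝ (fun v => dot3 (f v) (g v)) u e
      = dot3 (fderiv ℝ f u e) (g u) + dot3 (f u) (fderiv ℝ g u e) := by
  have hf' := hasFDerivAt_pi'.1 hf.hasFDerivAt
  have hg' := hasFDerivAt_pi'.1 hg.hasFDerivAt
  have h : HasFDerivAt (fun v => dot3 (f v) (g v)) _ u :=
    HasFDerivAt.fun_sum (u := Finset.univ) (fun k _ => (hf' k).mul (hg' k))
  rw [h.fderiv]
  simp [dot3, Fin.sum_univ_three]
  ring

lemma alg_core (X0 X1 N0 N1 n : Vec3) (c : ℝ) (hc : c ≠ 0)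
    (hn : n = c • crossProduct X0 X1) (b e : Matrix (Fin 2) (Fin 2) ℝ)
    (hb : b.det ≠ 0) (hsym : b 0 1 = b 1 0)
    (h00 : dot3 N0 X0 = - b 0 0) (h01 : dot3 N0 X1 = - b 0 1)
    (h10 : dot3 N1 X0 = - b 1 0) (h11 : dot3 N1 X1 = - b 1 1)
    (hn0 : dot3 N0 n = 0) (hn1 : dot3 N1 n = 0)
    (hx0 : dot3 X0 n = 0) (hx1 : dot3 X1 n = 0)
    (e00 : e 0 0 = dot3 N0 N0) (e01 : e 0 1 = dot3 N0 N1)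
    (e10 : e 1 0 = dot3 N1 N0) (e11 : e 1 1 = dot3 N1 N1) (p q : ℝ) :
    ((b⁻¹ 0 0 * p) • X0 + (b⁻¹ 0 1 * p) • X1 + ((b⁻¹ 1 0 * q) • X0 + (b⁻¹ 1 1 * q) • X1))
    + ((e⁻¹ 0 0 * p) • N0 + (e⁻¹ 0 1 * p) • N1 + ((e⁻¹ 1 0 * q) • N0 + (e⁻¹ 1 1 * q) • N1))
    = 0 := by
  have hT : dot3 n (crossProduct N0 N1) = c * b.det := by
    rw [hn, Matrix.det_fin_two]
    have : b 0 0 * b 1 1 - b 0 1 * b 1 0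
      = dot3 N0 X0 * dot3 N1 X1 - dot3 N0 X1 * dot3 N1 X0 := by
      rw [h00, h01, h10, h11]; ring
    rw [this]
    simp [dot3, Fin.sum_univ_three, cross_apply]
    ring
  have hT0 : dot3 n (crossProduct N0 N1) ≠ 0 := by rw [hT]; exact mul_ne_zero hc hb
  have he : e.det ≠ 0 := by
    intro h
    have h2 : dot3 (crossProduct N0 N1) (crossProduct N0 N1) = 0 := by
      rw [← h, Matrix.det_fin_two, e00, e01, e10, e11]
      simp [dot3, Fin.sum_univ_three, cross_apply]
      ring
    have h3 : crossProduct N0 N1 = 0 := dotProduct_self_eq_zero.1 h2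
    apply hT0
    rw [h3]; simp [dot3]
  have hbi := Matrix.nonsing_inv_mul b (isUnit_iff_ne_zero.2 hb)
  have hei := Matrix.nonsing_inv_mul e (isUnit_iff_ne_zero.2 he)
  have B := fun i j => congrFun (congrFun hbi i) j
  have E := fun i j => congrFun (congrFun hei i) j
  simp only [Matrix.mul_apply, Fin.sum_univ_two] at B E
  have B00 := B 0 0
  have B01 := B 0 1
  have B10 := B 1 0
  have B11 := B 1 1
  have E00 := E 0 0
  have E01 := E 0 1
  have E10 := E 1 0
  have E11 := E 1 1
  simp at B00 B01 B10 B11 E00 E01 E10 E11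
  generalize b⁻¹ = bi at *
  generalize e⁻¹ = ei at *
  set W : Vec3 := _ + _ with hW
  have lin : ∀ y : Vec3, dot3 W y =
      (bi 0 0 * p + bi 1 0 * q) * dot3 X0 y + (bi 0 1 * p + bi 1 1 * q) * dot3 X1 y
      + ((ei 0 0 * p + ei 1 0 * q) * dot3 N0 y + (ei 0 1 * p + ei 1 1 * q) * dot3 N1 y) := by
    intro y
    simp [hW, dot3, Fin.sum_univ_three]
    ring
  have comm : ∀ y z : Vec3, dot3 y z = dot3 z y := fun y z => dotProduct_comm y z
  have w : dot3 W n = 0 := by rw [lin, hx0, hx1, hn0, hn1]; ring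
  have w0 : dot3 W N0 = 0 := by
    rw [lin, comm X0, comm X1, h00, h01, ← e00, ← e10]
    linear_combination -p * B00 - q * B10 + p * E00 + q * E10
      - (bi 0 1 * p + bi 1 1 * q) * hsym
  have w1 : dot3 W N1 = 0 := by
    rw [lin, comm X0, comm X1, h10, h11, ← e01, ← e11]
    linear_combination -p * B01 - q * B11 + p * E01 + q * E11
      + (bi 0 0 * p + bi 1 0 * q) * hsym
  clear_value W
  have key : dot3 n (crossProduct N0 N1) • W =
      dot3 W n • crossProduct N0 N1 + dot3 W N0 • crossProduct N1 n
        + dot3 W N1 • crossProduct n N0 := by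
    ext k
    fin_cases k <;> simp [dot3, Fin.sum_univ_three, cross_apply] <;> ring
  rw [w, w0, w1] at key
  simp at key
  exact key.resolve_left hT0

/-- `∇^{II}(φ, x) + ∇^{III}(φ, n) = 0` on `U`. -/
theorem stmt1 (U : Set Param) (x : Param → Vec3)
    (hU : IsOpen U) (hUconn : IsConnected U)
    (hx : ContDiffOn ℝ (⊤ : ℕ∞) x U) (himm : Immersed x U)
    (hpar : ∀ u ∈ U, (fformII x u).det ≠ 0)
    (φ : Param → ℝ) (hφ : ContDiffOn ℝ (⊤ : ℕ∞) φ U) :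
    ∀ u ∈ U,
      beltrami1 (fformII x) φ x u + beltrami1 (fformIII x) φ (gaussMap x) u = 0 := by
  intro u hu
  have hxat : ∀ v ∈ U, ContDiffAt ℝ (⊤ : ℕ∞) x v := fun v hv => hx.contDiffAt (hU.mem_nhds hv)
  have hpd : ∀ i, DifferentiableAt ℝ (pd i x) u := by
    intro i
    have h1 : ContDiffAt ℝ 1 (fderiv ℝ x) u := (hxat u hu).fderiv_right (by norm_cast)
    exact (h1.differentiableAt (by norm_num)).clm_apply (differentiableAt_const _)
  have hcr : ∀ v ∈ U, crossProduct (pd 0 x v) (pd 1 x v) ≠ 0 := fun v hv =>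
    crossProduct_ne_zero_iff_linearIndependent.2 (himm v hv)
  have hpos : ∀ v ∈ U, 0 < dot3 (crossProduct (pd 0 x v) (pd 1 x v))
      (crossProduct (pd 0 x v) (pd 1 x v)) := by
    intro v hv
    refine lt_of_le_of_ne (Finset.sum_nonneg fun k _ => mul_self_nonneg _) fun h => hcr v hv ?_
    exact dotProduct_self_eq_zero.1 h.symm
  have hcne : ∀ v ∈ U, norm3 (crossProduct (pd 0 x v) (pd 1 x v)) ≠ 0 := fun v hv =>
    (Real.sqrt_pos.2 (hpos v hv)).ne'
  have hdc : DifferentiableAt ℝ (fun v => crossProduct (pd 0 x v) (pd 1 x v)) u := by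
    have h0 := differentiableAt_pi.1 (hpd 0)
    have h1 := differentiableAt_pi.1 (hpd 1)
    rw [differentiableAt_pi]
    intro k
    fin_cases k <;> simp only [cross_apply] <;> simp <;>
      exact ((h0 _).mul (h1 _)).sub ((h0 _).mul (h1 _))
  have hdd : DifferentiableAt ℝ (fun v => dot3 (crossProduct (pd 0 x v) (pd 1 x v))
      (crossProduct (pd 0 x v) (pd 1 x v))) u := by
    have h0 := differentiableAt_pi.1 hdc
    unfold dot3
    exact DifferentiableAt.fun_sum fun k _ => (h0 k).mul (h0 k)
  have hdn : DifferentiableAt ℝ (gaussMap x) u := by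
    have h1 := (hdd.sqrt (hpos u hu).ne').inv (hcne u hu)
    exact h1.smul hdc
  have nn : ∀ v ∈ U, dot3 (gaussMap x v) (gaussMap x v) = 1 := by
    intro v hv
    have h1 : norm3 (crossProduct (pd 0 x v) (pd 1 x v)) ^ 2 = _ := Real.sq_sqrt (hpos v hv).le
    have h2 := hcne v hv
    have h3 : dot3 (gaussMap x v) (gaussMap x v)
      = (norm3 (crossProduct (pd 0 x v) (pd 1 x v)))⁻¹ ^ 2 *
        dot3 (crossProduct (pd 0 x v) (pd 1 x v)) (crossProduct (pd 0 x v) (pd 1 x v)) := by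
      simp only [gaussMap, dot3, Fin.sum_univ_three, Pi.smul_apply, smul_eq_mul]
      ring
    rw [h3, ← h1]
    field_simp
  have xn : ∀ j v, dot3 (pd j x v) (gaussMap x v) = 0 := by
    intro j v
    unfold gaussMap
    generalize norm3 _ = c
    fin_cases j <;> simp [dot3, Fin.sum_univ_three, cross_apply] <;> ring
  have comm : ∀ y z : Vec3, dot3 y z = dot3 z y := fun y z => dotProduct_comm y z
  have Nn : ∀ i, dot3 (pd i (gaussMap x) u) (gaussMap x u) = 0 := by
    intro i
    have h := fderiv_dot3 _ _ u (Pi.single i 1) hdn hdn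
    have h2 : (fun v => dot3 (gaussMap x v) (gaussMap x v)) =ᶠ[nhds u] fun _ => (1 : ℝ) := by
      filter_upwards [hU.mem_nhds hu] with v hv using nn v hv
    rw [h2.fderiv_eq, comm (gaussMap x u)] at h
    simp at h
    unfold pd
    linarith
  have NX : ∀ i j, dot3 (pd i (gaussMap x) u) (pd j x u) = - fformII x u i j := by
    intro i j
    have h := fderiv_dot3 _ _ u (Pi.single i 1) (hpd j) hdn
    have h2 : (fun v => dot3 (pd j x v) (gaussMap x v)) = fun _ => (0 : ℝ) := funext (xn j)
    rw [h2, comm (pd j x u)] at h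
    simp at h
    change 0 = fformII x u i j + dot3 (pd i (gaussMap x) u) (pd j x u) at h
    linarith
  have hsym : fformII x u 0 1 = fformII x u 1 0 := by
    have hs : IsSymmSndFDerivAt ℝ x u := (hxat u hu).isSymmSndFDerivAt (by simp; norm_cast)
    have hD : DifferentiableAt ℝ (fderiv ℝ x) u := by
      have h1 : ContDiffAt ℝ 1 (fderiv ℝ x) u := (hxat u hu).fderiv_right (by norm_cast)
      exact h1.differentiableAt (by norm_num)
    have hp : ∀ i j, pd i (pd j x) u
        = fderiv ℝ (fderiv ℝ x) u (Pi.single i 1) (Pi.single j 1) := by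
      intro i j
      have := (hD.hasFDerivAt.clm_apply (hasFDerivAt_const (Pi.single j 1 : Param) u)).fderiv
      change fderiv ℝ (fun v => fderiv ℝ x v (Pi.single j 1)) u _ = _
      rw [this]
      simp
    simp only [fformII, Matrix.of_apply, hp]
    rw [hs.eq]
  simp only [beltrami1, Fin.sum_univ_two]
  exact alg_core _ _ _ _ (gaussMap x u) _ (inv_ne_zero (hcne u hu)) rfl _ _ (hpar u hu) hsym
    (NX 0 0) (NX 0 1) (NX 1 0) (NX 1 1) (Nn 0) (Nn 1) (xn 0 u) (xn 1 u) rfl rfl rfl rfl _ _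
end
end

section
/- The logarithmic derivative of the Gauss curvature satisfies K_{/k}/K = b^{ij} ∇^I_i b_{kj} for k = 1, 2, where ∇^I_i b_{kj} = b_{kj/i} − Γ_{ik}^m b_{mj} − Γ_{ij}^m b_{km} is the covariant derivative of the second fundamental tensor with respect to the Christoffel symbols Γ_{ij}^k = (1/2) g^{km}(−g_{ij/m} + g_{im/j} + g_{jm/i}) of the first fundamental form, and (b^{ij}) is the inverse of (b_{ij}). -/
open Matrix

noncomputable section

/-- Christoffel symbols `Γ_{ij}^k = (1/2) g^{km}(−g_{ij/m} + g_{im/j} + g_{jm/i})`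
of the first fundamental form. -/
noncomputable def christoffelI (x : Param → Vec3) (u : Param) (i j k : Fin 2) : ℝ :=
  (1 / 2) * ∑ m, (fformI x u)⁻¹ k m *
    (-(pds m (fun v => fformI x v i j) u) + pds j (fun v => fformI x v i m) u +
      pds i (fun v => fformI x v j m) u)

/-- Covariant derivative `∇^I_i b_{kj} = b_{kj/i} − Γ_{ik}^m b_{mj} − Γ_{ij}^m b_{km}`
of the second fundamental tensor with respect to the first fundamental form. -/
noncomputable def covDerivII (x : Param → Vec3) (i k j : Fin 2) (u : Param) : ℝ :=
  pds i (fun v => fformII x v k j) u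
    - ∑ m, christoffelI x u i k m * fformII x u m j
    - ∑ m, christoffelI x u i j m * fformII x u k m


lemma aux_pd_smooth {U : Set Param} (hU : IsOpen U) {f : Param → Vec3}
    (hf : ContDiffOn ℝ (⊤ : ℕ∞) f U) (i : Fin 2) : ContDiffOn ℝ (⊤ : ℕ∞) (pd i f) U := by
  have h := hf.fderiv_of_isOpen (m := (⊤ : ℕ∞)) hU (by simp)
  exact h.clm_apply contDiffOn_const

lemma aux_diff {U : Set Param} (hU : IsOpen U) {f : Param → Vec3}
    (hf : ContDiffOn ℝ (⊤ : ℕ∞) f U) {u : Param} (hu : u ∈ U) : DifferentiableAt ℝ f u :=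
  (hf.contDiffAt (hU.mem_nhds hu)).differentiableAt (by simp)

lemma aux_symm {U : Set Param} (hU : IsOpen U) {f : Param → Vec3}
    (hf : ContDiffOn ℝ (⊤ : ℕ∞) f U) {u : Param} (hu : u ∈ U) (i j : Fin 2) :
    pd i (pd j f) u = pd j (pd i f) u := by
  have hc := hf.contDiffAt (hU.mem_nhds hu)
  have hs : IsSymmSndFDerivAt ℝ f u := hc.isSymmSndFDerivAt (by
    simp only [minSmoothness_of_isRCLikeNormedField]; exact WithTop.coe_le_coe.2 (le_top : (2 : ℕ∞) ≤ ⊤))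
  have hd : DifferentiableAt ℝ (fderiv ℝ f) u :=
    ((hf.fderiv_of_isOpen (m := (⊤ : ℕ∞)) hU (by simp)).contDiffAt
      (hU.mem_nhds hu)).differentiableAt (by simp)
  have key : ∀ a b : Fin 2, pd a (pd b f) u
      = fderiv ℝ (fderiv ℝ f) u (Pi.single a 1) (Pi.single b 1) := by
    intro a b
    have : pd b f = fun v => fderiv ℝ f v (Pi.single b 1) := rfl
    rw [this, pd, fderiv_clm_apply hd (differentiableAt_const _)]
    simp
  rw [key, key]
  exact hs _ _

lemma aux_dot_diff {f g : Param → Vec3} {u : Param}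
    (hf : DifferentiableAt ℝ f u) (hg : DifferentiableAt ℝ g u) :
    DifferentiableAt ℝ (fun v => dot3 (f v) (g v)) u := by
  have hf' := differentiableAt_pi.1 hf
  have hg' := differentiableAt_pi.1 hg
  unfold dot3
  exact DifferentiableAt.fun_sum fun k _ => (hf' k).mul (hg' k)

lemma aux_pds_dot {f g : Param → Vec3} {u : Param}
    (hf : DifferentiableAt ℝ f u) (hg : DifferentiableAt ℝ g u) (i : Fin 2) :
    pds i (fun v => dot3 (f v) (g v)) u = dot3 (pd i f u) (g u) + dot3 (f u) (pd i g u) := by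
  have hf' := differentiableAt_pi.1 hf
  have hg' := differentiableAt_pi.1 hg
  have e : ∀ (h : Param → Vec3), DifferentiableAt ℝ h u → ∀ k,
      pd i h u k = fderiv ℝ (fun v => h v k) u (Pi.single i 1) := by
    intro h hh k
    rw [pd, fderiv_apply hh]
    rfl
  unfold dot3 pds
  rw [fderiv_fun_sum fun k _ => (hf' k).fun_mul (hg' k)]
  rw [← Finset.sum_add_distrib, _root_.sum_apply]
  refine Finset.sum_congr rfl fun k _ => ?_
  rw [fderiv_fun_mul (hf' k) (hg' k), e f hf, e g hg]
  simp
  ring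

lemma aux_gram (A B v m : Vec3) :
    (dot3 A A * dot3 B B - dot3 A B * dot3 A B) * dot3 v m
      = (dot3 B B * dot3 m A - dot3 A B * dot3 m B) * dot3 v A
      + (dot3 A A * dot3 m B - dot3 A B * dot3 m A) * dot3 v B
      + dot3 v (crossProduct A B) * dot3 m (crossProduct A B) := by
  simp only [dot3, cross_apply, Fin.sum_univ_three]
  simp
  ring

lemma aux_cross_sq (A B : Vec3) :
    dot3 (crossProduct A B) (crossProduct A B)
      = dot3 A A * dot3 B B - dot3 A B * dot3 A B := by
  simp only [dot3, cross_apply, Fin.sum_univ_three]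
  simp
  ring

lemma aux_dot_pos {A : Vec3} (h : A ≠ 0) : 0 < dot3 A A := by
  have h0 : 0 ≤ dot3 A A := Finset.sum_nonneg fun k _ => mul_self_nonneg _
  refine lt_of_le_of_ne h0 fun he => h ?_
  have := (Finset.sum_eq_zero_iff_of_nonneg (fun k _ => mul_self_nonneg (A k))).1 he.symm
  funext k
  simpa using this k (Finset.mem_univ k)

lemma aux_dot_comm (A B : Vec3) : dot3 A B = dot3 B A := by
  simp only [dot3, mul_comm]

lemma aux_dot_smul (c : ℝ) (A B : Vec3) : dot3 A (c • B) = c * dot3 A B := by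
  simp only [dot3, Finset.mul_sum, Pi.smul_apply, smul_eq_mul]
  exact Finset.sum_congr rfl fun k _ => by ring

lemma aux_cross_orth (A B : Vec3) :
    dot3 A (crossProduct A B) = 0 ∧ dot3 B (crossProduct A B) = 0 := by
  constructor <;>
  · simp only [dot3, cross_apply, Fin.sum_univ_three]
    simp
    ring

lemma aux_norm_dot {A : Vec3} (h : A ≠ 0) :
    dot3 ((norm3 A)⁻¹ • A) ((norm3 A)⁻¹ • A) = 1 := by
  have hp := aux_dot_pos h
  rw [aux_dot_smul, aux_dot_comm, aux_dot_smul]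
  have : norm3 A * norm3 A = dot3 A A := Real.mul_self_sqrt hp.le
  have h0 : norm3 A ≠ 0 := (Real.sqrt_pos.2 hp).ne'
  rw [← this]
  field_simp

lemma aux_cross_diff {f g : Param → Vec3} {u : Param}
    (hf : DifferentiableAt ℝ f u) (hg : DifferentiableAt ℝ g u) :
    DifferentiableAt ℝ (fun v => crossProduct (f v) (g v)) u := by
  have hf' := differentiableAt_pi.1 hf
  have hg' := differentiableAt_pi.1 hg
  rw [differentiableAt_pi]
  intro k
  simp only [cross_apply]
  fin_cases k <;> simp <;>
  exact ((hf' _).mul (hg' _)).sub ((hf' _).mul (hg' _))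

lemma aux_gauss_diff {x : Param → Vec3} {u : Param}
    (h0 : DifferentiableAt ℝ (pd 0 x) u) (h1 : DifferentiableAt ℝ (pd 1 x) u)
    (hN : crossProduct (pd 0 x u) (pd 1 x u) ≠ 0) : DifferentiableAt ℝ (gaussMap x) u := by
  have hc := aux_cross_diff h0 h1
  have hd := aux_dot_diff hc hc
  have hp := aux_dot_pos hN
  have hs := hd.sqrt hp.ne'
  exact (hs.inv (Real.sqrt_pos.2 hp).ne').smul hc

lemma aux_pds_congr {f g : Param → ℝ} {U : Set Param} (hU : IsOpen U) {u : Param} (hu : u ∈ U)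
    (h : ∀ v ∈ U, f v = g v) (i : Fin 2) : pds i f u = pds i g u := by
  unfold pds
  rw [Filter.EventuallyEq.fderiv_eq (Filter.eventuallyEq_of_mem (hU.mem_nhds hu) h)]

lemma aux_pds_const (c : ℝ) (i : Fin 2) (u : Param) : pds i (fun _ => c) u = 0 := by
  simp [pds]

lemma aux_pds_quot {a b c d e f g h : Param → ℝ} {u : Param} (k : Fin 2)
    (ha : DifferentiableAt ℝ a u) (hb : DifferentiableAt ℝ b u)
    (hc : DifferentiableAt ℝ c u) (hd : DifferentiableAt ℝ d u)
    (he : DifferentiableAt ℝ e u) (hf : DifferentiableAt ℝ f u)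
    (hg : DifferentiableAt ℝ g u) (hh : DifferentiableAt ℝ h u)
    (h0 : e u * f u - g u * h u ≠ 0) :
    pds k (fun v => (a v * b v - c v * d v) / (e v * f v - g v * h v)) u
      = ((pds k a u * b u + a u * pds k b u - pds k c u * d u - c u * pds k d u)
          * (e u * f u - g u * h u)
        - (a u * b u - c u * d u)
          * (pds k e u * f u + e u * pds k f u - pds k g u * h u - g u * pds k h u))
        / (e u * f u - g u * h u) ^ 2 := by
  have H1 := (ha.hasFDerivAt.mul hb.hasFDerivAt).sub (hc.hasFDerivAt.mul hd.hasFDerivAt)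
  have H2 := (he.hasFDerivAt.mul hf.hasFDerivAt).sub (hg.hasFDerivAt.mul hh.hasFDerivAt)
  have L : ∀ F : Param → ℝ, DifferentiableAt ℝ F u →
      HasDerivAt (fun t : ℝ => F (u + t • Pi.single k 1)) (pds k F u) 0 := by
    intro F hF
    have : HasFDerivAt F (fderiv ℝ F u) (u + (0:ℝ) • (Pi.single k 1 : Param)) := by
      simpa using hF.hasFDerivAt
    have h2 : HasDerivAt (fun t : ℝ => u + t • (Pi.single k 1 : Param)) (Pi.single k 1) 0 := by
      simpa using ((hasDerivAt_id (0:ℝ)).smul_const (Pi.single k 1 : Param)).const_add u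
    exact this.comp_hasDerivAt 0 h2
  have hq : DifferentiableAt ℝ
      (fun v => (a v * b v - c v * d v) / (e v * f v - g v * h v)) u :=
    by
    simp only [div_eq_mul_inv]
    exact ((ha.fun_mul hb).fun_sub (hc.fun_mul hd)).fun_mul
      (((he.fun_mul hf).fun_sub (hg.fun_mul hh)).fun_inv h0)
  have R := (((L a ha).mul (L b hb)).sub ((L c hc).mul (L d hd))).div
    (((L e he).mul (L f hf)).sub ((L g hg).mul (L h hh))) (by simpa using h0)
  refine ((L _ hq).unique R).trans ?_
  simp
  ring

/-- `K_{/k}/K = b^{ij} ∇^I_i b_{kj}` on `U`. -/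
theorem stmt2 (U : Set Param) (x : Param → Vec3)
    (hU : IsOpen U) (hUconn : IsConnected U)
    (hx : ContDiffOn ℝ (⊤ : ℕ∞) x U) (himm : Immersed x U)
    (hpar : ∀ u ∈ U, (fformII x u).det ≠ 0) :
    ∀ u ∈ U, ∀ k : Fin 2,
      pds k (gaussCurv x) u / gaussCurv x u =
        ∑ i, ∑ j, (fformII x u)⁻¹ i j * covDerivII x i k j u := by
  intro u hu k
  have hs := fun i => aux_pd_smooth hU hx i
  have hd : ∀ i, DifferentiableAt ℝ (pd i x) u := fun i => aux_diff hU (hs i) hu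
  have hss := fun i j => aux_pd_smooth hU (hs j) i
  have hdd : ∀ i j, DifferentiableAt ℝ (pd i (pd j x)) u := fun i j => aux_diff hU (hss i j) hu
  have hN : ∀ v ∈ U, crossProduct (pd 0 x v) (pd 1 x v) ≠ 0 := fun v hv =>
    crossProduct_ne_zero_iff_linearIndependent.2 (himm v hv)
  have hn : DifferentiableAt ℝ (gaussMap x) u := aux_gauss_diff (hd 0) (hd 1) (hN u hu)
  have hgd : ∀ i j, DifferentiableAt ℝ (fun v => fformI x v i j) u := fun i j =>
    aux_dot_diff (hd i) (hd j)
  have hbd : ∀ i j, DifferentiableAt ℝ (fun v => fformII x v i j) u := fun i j =>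
    aux_dot_diff (hdd i j) hn
  have hgsym : ∀ v i j, fformI x v i j = fformI x v j i := fun v i j => aux_dot_comm _ _
  have hbsym : ∀ v ∈ U, fformII x v 1 0 = fformII x v 0 1 := fun v hv => by
    change dot3 _ _ = dot3 _ _
    rw [aux_symm hU hx hv 1 0]
  have hdet : fformI x u 0 0 * fformI x u 1 1 - fformI x u 0 1 * fformI x u 0 1 ≠ 0 := by
    have := aux_dot_pos (hN u hu)
    rw [aux_cross_sq] at this
    exact this.ne'
  have hbdet : fformII x u 0 0 * fformII x u 1 1 - fformII x u 0 1 * fformII x u 0 1 ≠ 0 := by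
    have := hpar u hu
    rw [Matrix.det_fin_two, hbsym u hu] at this
    exact this
  -- orthogonality
  have ho : ∀ v m, dot3 (pd m x v) (gaussMap x v) = 0 := by
    intro v m
    unfold gaussMap
    rw [aux_dot_smul]
    have := aux_cross_orth (pd 0 x v) (pd 1 x v)
    fin_cases m
    · simp [this.1]
    · simp [this.2]
  have hnA : ∀ i m, dot3 (pd i (gaussMap x) u) (pd m x u) = - fformII x u i m := by
    intro i m
    have h1 := aux_pds_dot (hd m) hn i
    have h2 : (fun v => dot3 (pd m x v) (gaussMap x v)) = fun _ => (0:ℝ) := by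
      funext v; exact ho v m
    rw [h2, aux_pds_const] at h1
    have h3 : fformII x u i m = dot3 (pd i (pd m x) u) (gaussMap x u) := rfl
    rw [aux_dot_comm, h3]
    linarith
  have hnn : ∀ i, dot3 (pd i (gaussMap x) u) (gaussMap x u) = 0 := by
    intro i
    have h1 := aux_pds_dot hn hn i
    rw [aux_pds_congr (f := fun v => dot3 (gaussMap x v) (gaussMap x v)) hU hu (g := fun _ => 1) (fun v hv => aux_norm_dot (hN v hv)) i,
      aux_pds_const, aux_dot_comm (gaussMap x u)] at h1
    linarith
  have hnN : ∀ i, dot3 (pd i (gaussMap x) u) (crossProduct (pd 0 x u) (pd 1 x u)) = 0 := by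
    intro i
    have h1 := hnn i
    unfold gaussMap at h1
    rw [aux_dot_smul] at h1
    rcases mul_eq_zero.1 h1 with h | h
    · exact absurd h (inv_ne_zero (Real.sqrt_pos.2 (aux_dot_pos (hN u hu))).ne')
    · exact h
  have hW : ∀ i a b, (fformI x u 0 0 * fformI x u 1 1 - fformI x u 0 1 * fformI x u 0 1)
      * dot3 (pd a (pd b x) u) (pd i (gaussMap x) u)
      = - (fformI x u 1 1 * fformII x u i 0 - fformI x u 0 1 * fformII x u i 1)
          * dot3 (pd a (pd b x) u) (pd 0 x u)
        - (fformI x u 0 0 * fformII x u i 1 - fformI x u 0 1 * fformII x u i 0)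
          * dot3 (pd a (pd b x) u) (pd 1 x u) := by
    intro i a b
    have h := aux_gram (pd 0 x u) (pd 1 x u) (pd a (pd b x) u) (pd i (gaussMap x) u)
    rw [hnN, hnA, hnA] at h
    refine h.trans ?_
    simp only [fformI, Matrix.of_apply]
    ring
  have hdb : ∀ i a b, pds i (fun v => fformII x v a b) u
      = dot3 (pd i (pd a (pd b x)) u) (gaussMap x u)
        + dot3 (pd a (pd b x) u) (pd i (gaussMap x) u) := fun i a b =>
    aux_pds_dot (hdd a b) hn i
  have hdg : ∀ i a b, pds i (fun v => fformI x v a b) u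
      = dot3 (pd i (pd a x) u) (pd b x u) + dot3 (pd i (pd b x) u) (pd a x u) := fun i a b => by
    rw [aux_dot_comm (pd i (pd b x) u)]
    exact aux_pds_dot (hd a) (hd b) i
  have hC : ∀ j, pds 0 (fun v => fformII x v 1 j) u - pds 1 (fun v => fformII x v 0 j) u
      = dot3 (pd 1 (pd j x) u) (pd 0 (gaussMap x) u)
        - dot3 (pd 0 (pd j x) u) (pd 1 (gaussMap x) u) := fun j => by
    rw [hdb, hdb, aux_symm hU (hs j) hu 0 1]
    ring
  have hX : pd 1 (pd 0 x) u = pd 0 (pd 1 x) u := aux_symm hU hx hu 1 0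
  have hbs : ∀ i, pds i (fun v => fformII x v 1 0) u = pds i (fun v => fformII x v 0 1) u :=
    fun i => aux_pds_congr hU hu hbsym i
  have hK : gaussCurv x = fun v =>
      (fformII x v 0 0 * fformII x v 1 1 - fformII x v 0 1 * fformII x v 1 0) /
      (fformI x v 0 0 * fformI x v 1 1 - fformI x v 0 1 * fformI x v 1 0) := by
    funext v
    rw [gaussCurv, Matrix.det_fin_two, Matrix.det_fin_two]
  have hC0 := hC 0
  have hC1 := hC 1
  have hq := aux_pds_quot k (hbd 0 0) (hbd 1 1) (hbd 0 1) (hbd 1 0)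
    (hgd 0 0) (hgd 1 1) (hgd 0 1) (hgd 1 0) (by rw [hgsym u 1 0]; exact hdet)
  rw [← hK] at hq
  rw [hq, hK]
  have hinv : ∀ M : Matrix (Fin 2) (Fin 2) ℝ, M⁻¹ = (M 0 0 * M 1 1 - M 0 1 * M 1 0)⁻¹ •
      !![M 1 1, -M 0 1; -M 1 0, M 0 0] := fun M => by
    rw [Matrix.inv_def, Matrix.adjugate_fin_two, Ring.inverse_eq_inv', Matrix.det_fin_two]
  have hw1 := hW 0 1 0
  have hw2 := hW 1 0 0
  have hw3 := hW 0 1 1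
  have hw4 := hW 1 0 1
  have e0 : pds 1 (fun v => fformII x v 0 0) u = pds 0 (fun v => fformII x v 1 0) u
      - dot3 (pd 1 (pd 0 x) u) (pd 0 (gaussMap x) u)
      + dot3 (pd 0 (pd 0 x) u) (pd 1 (gaussMap x) u) := by linarith
  have e1 : pds 1 (fun v => fformII x v 0 1) u = pds 0 (fun v => fformII x v 1 1) u
      - dot3 (pd 1 (pd 1 x) u) (pd 0 (gaussMap x) u)
      + dot3 (pd 0 (pd 1 x) u) (pd 1 (gaussMap x) u) := by linarith
  rw [mul_comm, ← eq_div_iff hdet] at hw1 hw2 hw3 hw4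
  rw [hw1, hw2] at e0
  rw [hw3, hw4] at e1
  clear hq hw1 hw2 hw3 hw4 hC0 hC1
  obtain rfl | rfl : k = 0 ∨ k = 1 := by fin_cases k <;> simp
  all_goals
    simp only [covDerivII, christoffelI, hinv, Fin.sum_univ_two, Matrix.smul_apply,
      Matrix.of_apply, Matrix.cons_val', Matrix.cons_val_zero, Matrix.cons_val_one, smul_eq_mul,
      hdg, hbs, hgsym u 1 0, hbsym u hu, hX] at e0 e1 ⊢
    rw [e0, e1]
    clear e0 e1
    generalize pds 0 (fun v => fformII x v 0 0) u = p1
    generalize pds 0 (fun v => fformII x v 0 1) u = p2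
    generalize pds 0 (fun v => fformII x v 1 1) u = p3
    generalize pds 1 (fun v => fformII x v 1 1) u = p4
    generalize dot3 (pd 0 (pd 0 x) u) (pd 0 x u) = q1
    generalize dot3 (pd 0 (pd 0 x) u) (pd 1 x u) = q2
    generalize dot3 (pd 0 (pd 1 x) u) (pd 0 x u) = q3
    generalize dot3 (pd 0 (pd 1 x) u) (pd 1 x u) = q4
    generalize dot3 (pd 1 (pd 1 x) u) (pd 0 x u) = q5
    generalize dot3 (pd 1 (pd 1 x) u) (pd 1 x u) = q6
    clear * - hdet hbdet
    generalize fformI x u 0 0 = E at *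
    generalize fformI x u 0 1 = F at *
    generalize fformI x u 1 1 = G at *
    generalize fformII x u 0 0 = L at *
    generalize fformII x u 0 1 = M at *
    generalize fformII x u 1 1 = N at *
    clear * - hdet hbdet
    generalize hD : E * G - F * F = D at *
    generalize hB : L * N - M * M = B at *
    field_simp
    rw [← hD, ← hB]
    ring
end
end
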